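/- Let λ ∈ ℝ and define H_λ(x) = (24 − λx) ln x + [(9λ − 172)x + 12λ − 256] ln(x+1) + 4[(37 − 2λ)x − 3λ + 61] ln(x+2) and G_λ(x) = ln Γ(x) + x + 1/(12(1+x)²) + (λ − 48)/(48(1+x)) + H_λ(x)/24. Then (-1)^{k+1} G_λ^{(k)}(x) > 0 for every integer k ≥ 1 and every x ∈ (0,∞) if and only if λ ≥ 4. -/

import Mathlib

/-- `H_λ(x)` as in the paper. -/
noncomputable def H (lam x : ℝ) : ℝ :=
  (24 - lam * x) * Real.log x +
    ((9 * lam - 172) * x + 12 * lam - 256) * Real.log (x + 1) +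
    4 * ((37 - 2 * lam) * x - 3 * lam + 61) * Real.log (x + 2)

/-- `G_λ(x)` as in the paper. -/
noncomputable def G (lam x : ℝ) : ℝ :=
  Real.log (Real.Gamma x) + x + 1 / (12 * (1 + x) ^ 2) +
    (lam - 48) / (48 * (1 + x)) + H lam x / 24

lemma neg_of_deriv_neg {f f' : ℝ → ℝ} (h0 : f 0 ≤ 0) (hd : ∀ t, HasDerivAt f (f' t) t)
    (hneg : ∀ t, 0 < t → f' t < 0) (t : ℝ) (ht : 0 < t) : f t < 0 := by
  have hanti : StrictAntiOn f (Set.Ici 0) := by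
    refine strictAntiOn_of_deriv_neg (convex_Ici 0)
      (fun x _ => (hd x).continuousAt.continuousWithinAt) ?_
    intro x hx
    rw [interior_Ici] at hx
    rw [(hd x).deriv]
    exact hneg x hx
  exact lt_of_lt_of_le (hanti Set.self_mem_Ici ht.le ht) h0

lemma hd_mono (c t : ℝ) (i : ℕ) : HasDerivAt (fun t : ℝ => c * t ^ i) (c * (i * t ^ (i - 1))) t :=
  (hasDerivAt_pow i t).const_mul c

lemma hd_exp (j : ℕ) (t : ℝ) :
    HasDerivAt (fun t : ℝ => Real.exp t ^ j) (j * Real.exp t ^ j) t := by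
  have h := HasDerivAt.exp ((hasDerivAt_id t).const_mul (j : ℝ))
  simp only [id, mul_one, Real.exp_nat_mul] at h
  rwa [mul_comm] at h

lemma Rneg_9 (t : ℝ) (ht : 0 < t) : ((-576) * t ^ 0) * Real.exp t ^ 1 + ((48) * t ^ 0) < 0 := by
  have := Real.add_one_le_exp t
  nlinarith

lemma Rneg_8 (t : ℝ) (ht : 0 < t) : ((-576) * t ^ 0) * Real.exp t ^ 1 + ((64) * t ^ 0 + (48) * t ^ 1) < 0 := by
  refine neg_of_deriv_neg (f := fun t : ℝ => ((-576) * t ^ 0) * Real.exp t ^ 1 + ((64) * t ^ 0 + (48) * t ^ 1))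
    (f' := fun t : ℝ => (((-576) * t ^ 0) * Real.exp t ^ 1 + ((48) * t ^ 0)) * Real.exp t ^ 0) (by norm_num) (fun t => ?_)
    (fun t ht => mul_neg_of_neg_of_pos (Rneg_9 t ht) (by positivity)) t ht
  exact HasDerivAt.congr_deriv (by
    repeat (first | exact hd_mono _ _ _ | exact hd_exp _ _ | apply HasDerivAt.fun_add |
      apply HasDerivAt.fun_mul)) (by simp <;> ring)

lemma Rneg_7 (t : ℝ) (ht : 0 < t) : ((-576) * t ^ 0) * Real.exp t ^ 1 + ((-4) * t ^ 0 + (64) * t ^ 1 + (24) * t ^ 2) < 0 := by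
  refine neg_of_deriv_neg (f := fun t : ℝ => ((-576) * t ^ 0) * Real.exp t ^ 1 + ((-4) * t ^ 0 + (64) * t ^ 1 + (24) * t ^ 2))
    (f' := fun t : ℝ => (((-576) * t ^ 0) * Real.exp t ^ 1 + ((64) * t ^ 0 + (48) * t ^ 1)) * Real.exp t ^ 0) (by norm_num) (fun t => ?_)
    (fun t ht => mul_neg_of_neg_of_pos (Rneg_8 t ht) (by positivity)) t ht
  exact HasDerivAt.congr_deriv (by
    repeat (first | exact hd_mono _ _ _ | exact hd_exp _ _ | apply HasDerivAt.fun_add |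
      apply HasDerivAt.fun_mul)) (by simp <;> ring)

lemma Rneg_6 (t : ℝ) (ht : 0 < t) : ((-576) * t ^ 0) * Real.exp t ^ 1 + ((116) * t ^ 0 + (-4) * t ^ 1 + (32) * t ^ 2 + (8) * t ^ 3) < 0 := by
  refine neg_of_deriv_neg (f := fun t : ℝ => ((-576) * t ^ 0) * Real.exp t ^ 1 + ((116) * t ^ 0 + (-4) * t ^ 1 + (32) * t ^ 2 + (8) * t ^ 3))
    (f' := fun t : ℝ => (((-576) * t ^ 0) * Real.exp t ^ 1 + ((-4) * t ^ 0 + (64) * t ^ 1 + (24) * t ^ 2)) * Real.exp t ^ 0) (by norm_num) (fun t => ?_)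
    (fun t ht => mul_neg_of_neg_of_pos (Rneg_7 t ht) (by positivity)) t ht
  exact HasDerivAt.congr_deriv (by
    repeat (first | exact hd_mono _ _ _ | exact hd_exp _ _ | apply HasDerivAt.fun_add |
      apply HasDerivAt.fun_mul)) (by simp <;> ring)

lemma Rneg_5 (t : ℝ) (ht : 0 < t) : ((-288) * t ^ 0) * Real.exp t ^ 2 + ((136) * t ^ 0 + (-20) * t ^ 1 + (8) * t ^ 2 + (8) * t ^ 3) * Real.exp t ^ 1 + ((-12) * t ^ 0) < 0 := by
  refine neg_of_deriv_neg (f := fun t : ℝ => ((-288) * t ^ 0) * Real.exp t ^ 2 + ((136) * t ^ 0 + (-20) * t ^ 1 + (8) * t ^ 2 + (8) * t ^ 3) * Real.exp t ^ 1 + ((-12) * t ^ 0))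
    (f' := fun t : ℝ => (((-576) * t ^ 0) * Real.exp t ^ 1 + ((116) * t ^ 0 + (-4) * t ^ 1 + (32) * t ^ 2 + (8) * t ^ 3)) * Real.exp t ^ 1) (by norm_num) (fun t => ?_)
    (fun t ht => mul_neg_of_neg_of_pos (Rneg_6 t ht) (by positivity)) t ht
  exact HasDerivAt.congr_deriv (by
    repeat (first | exact hd_mono _ _ _ | exact hd_exp _ _ | apply HasDerivAt.fun_add |
      apply HasDerivAt.fun_mul)) (by simp <;> ring)

lemma Rneg_4 (t : ℝ) (ht : 0 < t) : ((-144) * t ^ 0) * Real.exp t ^ 2 + ((124) * t ^ 0 + (12) * t ^ 1 + (-16) * t ^ 2 + (8) * t ^ 3) * Real.exp t ^ 1 + ((20) * t ^ 0 + (-12) * t ^ 1) < 0 := by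
  refine neg_of_deriv_neg (f := fun t : ℝ => ((-144) * t ^ 0) * Real.exp t ^ 2 + ((124) * t ^ 0 + (12) * t ^ 1 + (-16) * t ^ 2 + (8) * t ^ 3) * Real.exp t ^ 1 + ((20) * t ^ 0 + (-12) * t ^ 1))
    (f' := fun t : ℝ => (((-288) * t ^ 0) * Real.exp t ^ 2 + ((136) * t ^ 0 + (-20) * t ^ 1 + (8) * t ^ 2 + (8) * t ^ 3) * Real.exp t ^ 1 + ((-12) * t ^ 0)) * Real.exp t ^ 0) (by norm_num) (fun t => ?_)
    (fun t ht => mul_neg_of_neg_of_pos (Rneg_5 t ht) (by positivity)) t ht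
  exact HasDerivAt.congr_deriv (by
    repeat (first | exact hd_mono _ _ _ | exact hd_exp _ _ | apply HasDerivAt.fun_add |
      apply HasDerivAt.fun_mul)) (by simp <;> ring)

lemma Rneg_3 (t : ℝ) (ht : 0 < t) : ((-72) * t ^ 0) * Real.exp t ^ 2 + ((32) * t ^ 0 + (92) * t ^ 1 + (-40) * t ^ 2 + (8) * t ^ 3) * Real.exp t ^ 1 + ((40) * t ^ 0 + (20) * t ^ 1 + (-6) * t ^ 2) < 0 := by
  refine neg_of_deriv_neg (f := fun t : ℝ => ((-72) * t ^ 0) * Real.exp t ^ 2 + ((32) * t ^ 0 + (92) * t ^ 1 + (-40) * t ^ 2 + (8) * t ^ 3) * Real.exp t ^ 1 + ((40) * t ^ 0 + (20) * t ^ 1 + (-6) * t ^ 2))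
    (f' := fun t : ℝ => (((-144) * t ^ 0) * Real.exp t ^ 2 + ((124) * t ^ 0 + (12) * t ^ 1 + (-16) * t ^ 2 + (8) * t ^ 3) * Real.exp t ^ 1 + ((20) * t ^ 0 + (-12) * t ^ 1)) * Real.exp t ^ 0) (by norm_num) (fun t => ?_)
    (fun t ht => mul_neg_of_neg_of_pos (Rneg_4 t ht) (by positivity)) t ht
  exact HasDerivAt.congr_deriv (by
    repeat (first | exact hd_mono _ _ _ | exact hd_exp _ _ | apply HasDerivAt.fun_add |
      apply HasDerivAt.fun_mul)) (by simp <;> ring)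

lemma Rneg_2 (t : ℝ) (ht : 0 < t) : ((-36) * t ^ 0) * Real.exp t ^ 2 + ((-188) * t ^ 0 + (220) * t ^ 1 + (-64) * t ^ 2 + (8) * t ^ 3) * Real.exp t ^ 1 + ((224) * t ^ 0 + (40) * t ^ 1 + (10) * t ^ 2 + (-2) * t ^ 3) < 0 := by
  refine neg_of_deriv_neg (f := fun t : ℝ => ((-36) * t ^ 0) * Real.exp t ^ 2 + ((-188) * t ^ 0 + (220) * t ^ 1 + (-64) * t ^ 2 + (8) * t ^ 3) * Real.exp t ^ 1 + ((224) * t ^ 0 + (40) * t ^ 1 + (10) * t ^ 2 + (-2) * t ^ 3))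
    (f' := fun t : ℝ => (((-72) * t ^ 0) * Real.exp t ^ 2 + ((32) * t ^ 0 + (92) * t ^ 1 + (-40) * t ^ 2 + (8) * t ^ 3) * Real.exp t ^ 1 + ((40) * t ^ 0 + (20) * t ^ 1 + (-6) * t ^ 2)) * Real.exp t ^ 0) (by norm_num) (fun t => ?_)
    (fun t ht => mul_neg_of_neg_of_pos (Rneg_3 t ht) (by positivity)) t ht
  exact HasDerivAt.congr_deriv (by
    repeat (first | exact hd_mono _ _ _ | exact hd_exp _ _ | apply HasDerivAt.fun_add |
      apply HasDerivAt.fun_mul)) (by simp <;> ring)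

lemma Rneg_1 (t : ℝ) (ht : 0 < t) : ((-12) * t ^ 0) * Real.exp t ^ 3 + ((-168) * t ^ 0 + (148) * t ^ 1 + (-38) * t ^ 2 + (4) * t ^ 3) * Real.exp t ^ 2 + ((216) * t ^ 0 + (8) * t ^ 1 + (16) * t ^ 2 + (-2) * t ^ 3) * Real.exp t ^ 1 + ((-36) * t ^ 0) < 0 := by
  refine neg_of_deriv_neg (f := fun t : ℝ => ((-12) * t ^ 0) * Real.exp t ^ 3 + ((-168) * t ^ 0 + (148) * t ^ 1 + (-38) * t ^ 2 + (4) * t ^ 3) * Real.exp t ^ 2 + ((216) * t ^ 0 + (8) * t ^ 1 + (16) * t ^ 2 + (-2) * t ^ 3) * Real.exp t ^ 1 + ((-36) * t ^ 0))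
    (f' := fun t : ℝ => (((-36) * t ^ 0) * Real.exp t ^ 2 + ((-188) * t ^ 0 + (220) * t ^ 1 + (-64) * t ^ 2 + (8) * t ^ 3) * Real.exp t ^ 1 + ((224) * t ^ 0 + (40) * t ^ 1 + (10) * t ^ 2 + (-2) * t ^ 3)) * Real.exp t ^ 1) (by norm_num) (fun t => ?_)
    (fun t ht => mul_neg_of_neg_of_pos (Rneg_2 t ht) (by positivity)) t ht
  exact HasDerivAt.congr_deriv (by
    repeat (first | exact hd_mono _ _ _ | exact hd_exp _ _ | apply HasDerivAt.fun_add |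
      apply HasDerivAt.fun_mul)) (by simp <;> ring)

lemma Rneg_0 (t : ℝ) (ht : 0 < t) : ((-4) * t ^ 0) * Real.exp t ^ 3 + ((-132) * t ^ 0 + (96) * t ^ 1 + (-22) * t ^ 2 + (2) * t ^ 3) * Real.exp t ^ 2 + ((252) * t ^ 0 + (-36) * t ^ 1 + (22) * t ^ 2 + (-2) * t ^ 3) * Real.exp t ^ 1 + ((-116) * t ^ 0 + (-36) * t ^ 1) < 0 := by
  refine neg_of_deriv_neg (f := fun t : ℝ => ((-4) * t ^ 0) * Real.exp t ^ 3 + ((-132) * t ^ 0 + (96) * t ^ 1 + (-22) * t ^ 2 + (2) * t ^ 3) * Real.exp t ^ 2 + ((252) * t ^ 0 + (-36) * t ^ 1 + (22) * t ^ 2 + (-2) * t ^ 3) * Real.exp t ^ 1 + ((-116) * t ^ 0 + (-36) * t ^ 1))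
    (f' := fun t : ℝ => (((-12) * t ^ 0) * Real.exp t ^ 3 + ((-168) * t ^ 0 + (148) * t ^ 1 + (-38) * t ^ 2 + (4) * t ^ 3) * Real.exp t ^ 2 + ((216) * t ^ 0 + (8) * t ^ 1 + (16) * t ^ 2 + (-2) * t ^ 3) * Real.exp t ^ 1 + ((-36) * t ^ 0)) * Real.exp t ^ 0) (by norm_num) (fun t => ?_)
    (fun t ht => mul_neg_of_neg_of_pos (Rneg_1 t ht) (by positivity)) t ht
  exact HasDerivAt.congr_deriv (by
    repeat (first | exact hd_mono _ _ _ | exact hd_exp _ _ | apply HasDerivAt.fun_add |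
      apply HasDerivAt.fun_mul)) (by simp <;> ring)

lemma qneg_4 (t : ℝ) (ht : 0 < t) : ((-4) * t ^ 0) * Real.exp t ^ 1 + ((1) * t ^ 0) < 0 := by
  have := Real.add_one_le_exp t
  nlinarith

lemma qneg_3 (t : ℝ) (ht : 0 < t) : ((-4) * t ^ 0) * Real.exp t ^ 1 + ((-1) * t ^ 0 + (1) * t ^ 1) < 0 := by
  refine neg_of_deriv_neg (f := fun t : ℝ => ((-4) * t ^ 0) * Real.exp t ^ 1 + ((-1) * t ^ 0 + (1) * t ^ 1))
    (f' := fun t : ℝ => (((-4) * t ^ 0) * Real.exp t ^ 1 + ((1) * t ^ 0)) * Real.exp t ^ 0) (by norm_num) (fun t => ?_)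
    (fun t ht => mul_neg_of_neg_of_pos (qneg_4 t ht) (by positivity)) t ht
  exact HasDerivAt.congr_deriv (by
    repeat (first | exact hd_mono _ _ _ | exact hd_exp _ _ | apply HasDerivAt.fun_add |
      apply HasDerivAt.fun_mul)) (by simp <;> ring)

lemma qneg_2 (t : ℝ) (ht : 0 < t) : ((-4) * t ^ 0) * Real.exp t ^ 1 + ((4) * t ^ 0 + (-1) * t ^ 1 + (1/2) * t ^ 2) < 0 := by
  refine neg_of_deriv_neg (f := fun t : ℝ => ((-4) * t ^ 0) * Real.exp t ^ 1 + ((4) * t ^ 0 + (-1) * t ^ 1 + (1/2) * t ^ 2))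
    (f' := fun t : ℝ => (((-4) * t ^ 0) * Real.exp t ^ 1 + ((-1) * t ^ 0 + (1) * t ^ 1)) * Real.exp t ^ 0) (by norm_num) (fun t => ?_)
    (fun t ht => mul_neg_of_neg_of_pos (qneg_3 t ht) (by positivity)) t ht
  exact HasDerivAt.congr_deriv (by
    repeat (first | exact hd_mono _ _ _ | exact hd_exp _ _ | apply HasDerivAt.fun_add |
      apply HasDerivAt.fun_mul)) (by simp <;> ring)

lemma qneg_1 (t : ℝ) (ht : 0 < t) : ((-2) * t ^ 0) * Real.exp t ^ 2 + ((6) * t ^ 0 + (-2) * t ^ 1 + (1/2) * t ^ 2) * Real.exp t ^ 1 + ((-4) * t ^ 0) < 0 := by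
  refine neg_of_deriv_neg (f := fun t : ℝ => ((-2) * t ^ 0) * Real.exp t ^ 2 + ((6) * t ^ 0 + (-2) * t ^ 1 + (1/2) * t ^ 2) * Real.exp t ^ 1 + ((-4) * t ^ 0))
    (f' := fun t : ℝ => (((-4) * t ^ 0) * Real.exp t ^ 1 + ((4) * t ^ 0 + (-1) * t ^ 1 + (1/2) * t ^ 2)) * Real.exp t ^ 1) (by norm_num) (fun t => ?_)
    (fun t ht => mul_neg_of_neg_of_pos (qneg_2 t ht) (by positivity)) t ht
  exact HasDerivAt.congr_deriv (by
    repeat (first | exact hd_mono _ _ _ | exact hd_exp _ _ | apply HasDerivAt.fun_add |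
      apply HasDerivAt.fun_mul)) (by simp <;> ring)

lemma qneg_0 (t : ℝ) (ht : 0 < t) : ((-1) * t ^ 0) * Real.exp t ^ 2 + ((9) * t ^ 0 + (-3) * t ^ 1 + (1/2) * t ^ 2) * Real.exp t ^ 1 + ((-8) * t ^ 0 + (-4) * t ^ 1) < 0 := by
  refine neg_of_deriv_neg (f := fun t : ℝ => ((-1) * t ^ 0) * Real.exp t ^ 2 + ((9) * t ^ 0 + (-3) * t ^ 1 + (1/2) * t ^ 2) * Real.exp t ^ 1 + ((-8) * t ^ 0 + (-4) * t ^ 1))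
    (f' := fun t : ℝ => (((-2) * t ^ 0) * Real.exp t ^ 2 + ((6) * t ^ 0 + (-2) * t ^ 1 + (1/2) * t ^ 2) * Real.exp t ^ 1 + ((-4) * t ^ 0)) * Real.exp t ^ 0) (by norm_num) (fun t => ?_)
    (fun t ht => mul_neg_of_neg_of_pos (qneg_1 t ht) (by positivity)) t ht
  exact HasDerivAt.congr_deriv (by
    repeat (first | exact hd_mono _ _ _ | exact hd_exp _ _ | apply HasDerivAt.fun_add |
      apply HasDerivAt.fun_mul)) (by simp <;> ring)
/-- derivative of `log Γ` -/
noncomputable def psi (x : ℝ) : ℝ := deriv (Real.log ∘ Real.Gamma) x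

lemma hd_psi (x : ℝ) (hx : 0 < x) :
    HasDerivAt (fun y => Real.log (Real.Gamma y)) (psi x) x := by
  have h1 : DifferentiableAt ℝ Real.Gamma x :=
    Real.differentiableAt_Gamma (fun m => by
      have : (0 : ℝ) ≤ m := Nat.cast_nonneg m
      intro h; linarith)
  exact (h1.log (Real.Gamma_pos_of_pos hx).ne').hasDerivAt

lemma logGamma_succ (x : ℝ) (hx : 0 < x) :
    Real.log (Real.Gamma (x + 1)) = Real.log x + Real.log (Real.Gamma x) := by
  rw [Real.Gamma_add_one hx.ne', Real.log_mul hx.ne' (Real.Gamma_pos_of_pos hx).ne']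

lemma psi_succ (x : ℝ) (hx : 0 < x) : psi (x + 1) = 1 / x + psi x := by
  have h1 : HasDerivAt (fun y => Real.log (Real.Gamma (y + 1))) (psi (x + 1)) x :=
    HasDerivAt.comp_add_const x 1 (hd_psi (x + 1) (by linarith))
  have h2 : HasDerivAt (fun y => Real.log y + Real.log (Real.Gamma y)) (1 / x + psi x) x := by
    have := (Real.hasDerivAt_log hx.ne').fun_add (hd_psi x hx)
    rwa [← one_div] at this
  refine h1.unique (h2.congr_of_eventuallyEq ?_)
  filter_upwards [lt_mem_nhds hx] with y hy using logGamma_succ y hy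

lemma psi_le_log (x : ℝ) (hx : 0 < x) : psi x ≤ Real.log x := by
  have := Real.convexOn_log_Gamma.le_slope_of_hasDerivAt (x := x) (y := x + 1) hx
    (show (0 : ℝ) < x + 1 by linarith) (by linarith) (hd_psi x hx)
  rw [slope_def_field] at this
  simpa [logGamma_succ x hx] using this

lemma log_le_psi_succ (x : ℝ) (hx : 0 < x) : Real.log x ≤ psi (x + 1) := by
  have := Real.convexOn_log_Gamma.slope_le_of_hasDerivAt (x := x) (y := x + 1) hx
    (show (0 : ℝ) < x + 1 by linarith) (by linarith) (hd_psi (x + 1) (by linarith))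
  rw [slope_def_field] at this
  simpa [logGamma_succ x hx] using this

open Filter Topology in
lemma tendsto_psi : Tendsto (fun x => psi x - Real.log x) atTop (𝓝 0) := by
  have h0 : Tendsto (fun x : ℝ => -(1 / x)) atTop (𝓝 0) := by
    have : Tendsto (fun x : ℝ => (1 / x)) atTop (𝓝 0) := by
      simpa using tendsto_inv_atTop_zero (𝕜 := ℝ)
    simpa using this.neg
  refine tendsto_of_tendsto_of_tendsto_of_le_of_le' h0 tendsto_const_nhds ?_ ?_
  · filter_upwards [eventually_gt_atTop 0] with x hx
    have h1 := log_le_psi_succ x hx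
    rw [psi_succ x hx] at h1
    linarith
  · filter_upwards [eventually_gt_atTop 0] with x hx
    have h1 := psi_le_log x hx
    linarith

/-- derivative of `G` -/
noncomputable def g (lam x : ℝ) : ℝ :=
  psi x + 1 - 1 / (6 * (1 + x) ^ 3) - (lam - 48) / (48 * (1 + x) ^ 2) +
    (-lam * Real.log x + (24 - lam * x) / x + (9 * lam - 172) * Real.log (x + 1) +
      ((9 * lam - 172) * x + 12 * lam - 256) / (x + 1) + 4 * (37 - 2 * lam) * Real.log (x + 2) +
      4 * ((37 - 2 * lam) * x - 3 * lam + 61) / (x + 2)) / 24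

lemma hd_log_add (c x : ℝ) (hx : 0 < x + c) :
    HasDerivAt (fun y => Real.log (y + c)) (1 / (x + c)) x := by
  have := HasDerivAt.log ((hasDerivAt_id x).add_const c) (by simpa using hx.ne')
  simpa using this

lemma hd_lin (a b x : ℝ) : HasDerivAt (fun y : ℝ => a * y + b) a x := by
  simpa using ((hasDerivAt_id x).const_mul a).add_const b

lemma hd_inv_pow (c d x : ℝ) (n : ℕ) (hx : 0 < x + d) :
    HasDerivAt (fun y : ℝ => c / (y + d) ^ (n + 1)) (-(n + 1) * c / (x + d) ^ (n + 2)) x := by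
  have h := (((hasDerivAt_id x).add_const d).pow (n + 1)).inv (by simpa using hx.ne')
  have h2 := h.const_mul c
  refine (h2.congr_of_eventuallyEq ?_).congr_deriv ?_
  · filter_upwards with y
    simp [div_eq_mul_inv]
  · have : x + d ≠ 0 := hx.ne'
    simp
    field_simp
    ring

lemma hd_G (lam x : ℝ) (hx : 0 < x) : HasDerivAt (G lam) (g lam x) x := by
  have h1 := hd_psi x hx
  have h2 := hd_inv_pow (1 / 12) 1 x 1 (by linarith)
  have h3 := hd_inv_pow ((lam - 48) / 48) 1 x 0 (by linarith)
  have l0 := (hd_lin (-lam) 24 x).fun_mul (hd_log_add 0 x (by linarith))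
  have l1 := (hd_lin (9 * lam - 172) (12 * lam - 256) x).fun_mul (hd_log_add 1 x (by linarith))
  have l2 := (hd_lin (4 * (37 - 2 * lam)) (4 * (- 3 * lam + 61)) x).fun_mul
    (hd_log_add 2 x (by linarith))
  have key := (((h1.fun_add (hasDerivAt_id' x)).fun_add h2).fun_add h3).fun_add
    (((l0.fun_add l1).fun_add l2).div_const 24)
  refine (key.congr_of_eventuallyEq ?_).congr_deriv ?_
  · filter_upwards [lt_mem_nhds hx] with y hy
    have : 1 + y ≠ 0 := by positivity
    have : y + 1 ≠ 0 := by positivity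
    simp only [G, H, add_zero]
    field_simp
    ring
  · have : 1 + x ≠ 0 := by positivity
    have : x + 1 ≠ 0 := by positivity
    have : x + 2 ≠ 0 := by positivity
    have : x ≠ 0 := by positivity
    simp only [g, add_zero]
    norm_num
    field_simp
    ring

open Filter Topology in
lemma tendsto_g (lam : ℝ) : Tendsto (g lam) atTop (𝓝 0) := by
  have hinv (d : ℝ) : Tendsto (fun x : ℝ => (x + d)⁻¹) atTop (𝓝 0) :=
    tendsto_inv_atTop_zero.comp (tendsto_atTop_add_const_right _ d tendsto_id)
  have hlog (d : ℝ) : Tendsto (fun x : ℝ => Real.log (1 + d * (x + 0)⁻¹)) atTop (𝓝 0) := by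
    have h : Tendsto (fun x : ℝ => 1 + d * (x + 0)⁻¹) atTop (𝓝 1) := by
      simpa using ((hinv 0).const_mul d).const_add 1
    simpa using h.log one_ne_zero
  have key := ((((((tendsto_psi.add (((hinv 1).pow 3).const_mul (-1 / 6))).add
    (((hinv 1).pow 2).const_mul (-(lam - 48) / 48))).add ((hlog 1).const_mul ((9 * lam - 172) / 24))).add
    ((hlog 2).const_mul ((148 - 8 * lam) / 24))).add ((hinv 0).const_mul 1)).add
    ((hinv 1).const_mul ((3 * lam - 84) / 24))).add ((hinv 2).const_mul ((4 * lam - 52) / 24))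
  refine (key.congr' ?_).trans_eq ?_
  · filter_upwards [eventually_gt_atTop 0] with x hx
    have e1 : Real.log (x + 1) = Real.log x + Real.log (1 + 1 * (x + 0)⁻¹) := by
      rw [← Real.log_mul hx.ne' (by positivity)]
      congr 1; field_simp; ring
    have e2 : Real.log (x + 2) = Real.log x + Real.log (1 + 2 * (x + 0)⁻¹) := by
      rw [← Real.log_mul hx.ne' (by positivity)]
      congr 1; field_simp; ring
    have : 1 + x ≠ 0 := by positivity
    have : x + 1 ≠ 0 := by positivity
    have : x + 2 ≠ 0 := by positivity
    rw [g, e1, e2]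
    simp only [add_zero]
    field_simp
    ring
  · norm_num

/-- derivative of `x ↦ g x - g (x + 1)` -/
noncomputable def r (lam x : ℝ) : ℝ :=
  (lam * (-1 / x + 10 / (x + 1) - 17 / (x + 2) + 8 / (x + 3) - 3 / (x + 1) ^ 2 - 1 / (x + 2) ^ 2 +
      4 / (x + 3) ^ 2 + 1 / (x + 1) ^ 3 - 1 / (x + 2) ^ 3) +
    (108 / (x + 1) ^ 2 + 12 / (x + 1) ^ 4 - 12 / (x + 2) ^ 4 - 48 / (x + 1) ^ 3 + 48 / (x + 2) ^ 3
      - 172 / (x + 1) + 320 / (x + 2) - 148 / (x + 3) - 32 / (x + 2) ^ 2 - 52 / (x + 3) ^ 2)) / 24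

lemma hd_gdiff (lam x : ℝ) (hx : 0 < x) :
    HasDerivAt (fun y => g lam y - g lam (y + 1)) (r lam x) x := by
  have l0 := (hd_log_add 0 x (by linarith)).const_mul (-lam / 24)
  have l1 := (hd_log_add 1 x (by linarith)).const_mul ((10 * lam - 172) / 24)
  have l2 := (hd_log_add 2 x (by linarith)).const_mul ((148 + 172 - 17 * lam) / 24)
  have l3 := (hd_log_add 3 x (by linarith)).const_mul (-(148 - 8 * lam) / 24)
  have i11 := hd_inv_pow ((3 * lam - 84 - 24) / 24) 1 x 0 (by linarith)
  have i21 := hd_inv_pow ((4 * lam - 52 - (3 * lam - 84)) / 24) 2 x 0 (by linarith)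
  have i31 := hd_inv_pow (-(4 * lam - 52) / 24) 3 x 0 (by linarith)
  have i12 := hd_inv_pow (-(lam - 48) / 48) 1 x 1 (by linarith)
  have i22 := hd_inv_pow ((lam - 48) / 48) 2 x 1 (by linarith)
  have i13 := hd_inv_pow (-1 / 6) 1 x 2 (by linarith)
  have i23 := hd_inv_pow (1 / 6) 2 x 2 (by linarith)
  have key := (((((((((l0.fun_add l1).fun_add l2).fun_add l3).fun_add i11).fun_add i21).fun_add
    i31).fun_add i12).fun_add i22).fun_add i13).fun_add i23
  refine (key.congr_of_eventuallyEq ?_).congr_deriv ?_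
  · filter_upwards [lt_mem_nhds hx] with y hy
    have : 1 + y ≠ 0 := by positivity
    have : y + 1 ≠ 0 := by positivity
    have : y + 2 ≠ 0 := by positivity
    have : y + 3 ≠ 0 := by positivity
    have : 1 + (y + 1) ≠ 0 := by positivity
    simp only [g, psi_succ y hy, add_zero]
    rw [show y + 1 + 1 = y + 2 by ring, show y + 1 + 2 = y + 3 by ring,
      show 1 + (y + 1) = y + 2 by ring, show 1 + y = y + 1 by ring]
    field_simp
    ring
  · have : x + 1 ≠ 0 := by positivity
    have : x + 2 ≠ 0 := by positivity
    have : x + 3 ≠ 0 := by positivity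
    have : x ≠ 0 := by positivity
    simp only [r, add_zero]
    norm_num
    field_simp
    ring

lemma r_eq (lam x : ℝ) (hx : 0 < x) :
    r lam x = ((80 - 20 * lam) * x ^ 6 + (536 - 175 * lam) * x ^ 5 + (1376 - 623 * lam) * x ^ 4 +
      (1676 - 1155 * lam) * x ^ 3 + (1016 - 1181 * lam) * x ^ 2 + (308 - 638 * lam) * x
      - 144 * lam) / (24 * (x * (x + 1) ^ 4 * (x + 2) ^ 4 * (x + 3) ^ 2)) := by
  rw [r]
  field_simp
  ring

lemma r_pos (lam : ℝ) (h : lam < 4) : ∃ X : ℝ, 0 < X ∧ ∀ x, X ≤ x → 0 < r lam x := by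
  set M := |536 - 175 * lam| + |1376 - 623 * lam| + |1676 - 1155 * lam| + |1016 - 1181 * lam| +
    |308 - 638 * lam| + |144 * lam| with hM
  have hM0 : 0 ≤ M := by positivity
  have hc : 0 < 80 - 20 * lam := by linarith
  refine ⟨1 + M / (80 - 20 * lam), by positivity, fun x hx => ?_⟩
  have hx1 : 1 ≤ x := le_trans (by have : 0 ≤ M / (80 - 20 * lam) := by positivity
                                   linarith) hx
  have hx0 : 0 < x := by linarith
  rw [r_eq lam x hx0]
  refine div_pos ?_ (by positivity)
  have h1 : M < (80 - 20 * lam) * x := by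
    have : M / (80 - 20 * lam) < x := by linarith
    rw [div_lt_iff₀ hc] at this
    linarith
  have b (c : ℝ) (k : ℕ) (hk : k ≤ 5) : -(|c| * x ^ 5) ≤ c * x ^ k := by
    have p1 : x ^ k ≤ x ^ 5 := pow_le_pow_right₀ hx1 hk
    have p2 : |c| * x ^ k ≤ |c| * x ^ 5 := by gcongr
    have p3 : -|c| * x ^ k ≤ c * x ^ k := by
      have : 0 ≤ x ^ k := by positivity
      gcongr
      exact neg_abs_le c
    linarith
  have h5 := b (536 - 175 * lam) 5 (by norm_num)
  have h4 := b (1376 - 623 * lam) 4 (by norm_num)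
  have h3 := b (1676 - 1155 * lam) 3 (by norm_num)
  have h2 := b (1016 - 1181 * lam) 2 (by norm_num)
  have h1' := b (308 - 638 * lam) 1 (by norm_num)
  have h0 := b (-(144 * lam)) 0 (by norm_num)
  rw [abs_neg] at h0
  have h6 : M * x ^ 5 < (80 - 20 * lam) * x * x ^ 5 := by gcongr
  rw [hM] at h6
  nlinarith

open Filter Topology in
lemma converse (lam : ℝ) (h : lam < 4) : ∃ x : ℝ, 0 < x ∧ g lam x ≤ 0 := by
  obtain ⟨X, hX, hr⟩ := r_pos lam h
  refine ⟨X, hX, ?_⟩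
  have hlim : Tendsto (fun y => g lam y - g lam (y + 1)) atTop (𝓝 0) := by
    simpa using (tendsto_g lam).sub
      ((tendsto_g lam).comp (tendsto_atTop_add_const_right _ 1 tendsto_id))
  have hmono : MonotoneOn (fun y => g lam y - g lam (y + 1)) (Set.Ici X) := by
    refine monotoneOn_of_deriv_nonneg (convex_Ici X)
      (fun x hx => (hd_gdiff lam x (hX.trans_le hx)).continuousAt.continuousWithinAt)
      (fun x hx => ?_) (fun x hx => ?_)
    · rw [interior_Ici] at hx
      exact (hd_gdiff lam x (hX.trans hx)).differentiableAt.differentiableWithinAt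
    · rw [interior_Ici] at hx
      rw [(hd_gdiff lam x (hX.trans hx)).deriv]
      exact (hr x hx.le).le
  have hle (x : ℝ) (hx : X ≤ x) : g lam x ≤ g lam (x + 1) := by
    have : g lam x - g lam (x + 1) ≤ 0 := by
      refine ge_of_tendsto hlim ?_
      filter_upwards [eventually_ge_atTop x] with y hy
      exact hmono hx (hx.trans hy) hy
    linarith
  have hseq (n : ℕ) : g lam X ≤ g lam (X + n) := by
    induction n with
    | zero => simp
    | succ n ih =>
      have := hle (X + n) (by have : (0 : ℝ) ≤ n := Nat.cast_nonneg n
                              linarith)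
      push_cast
      rw [← add_assoc]
      linarith
  refine ge_of_tendsto' ((tendsto_g lam).comp
    (tendsto_atTop_add_const_left _ X tendsto_natCast_atTop_atTop)) hseq
open MeasureTheory Filter Topology Set

/-- `v` is the value at `x` of the (convergent) Laplace transform of `φ`. -/
def Lap (φ : ℝ → ℝ) (x v : ℝ) : Prop :=
  IntegrableOn (fun t => φ t * Real.exp (-(x * t))) (Ioi 0) ∧
    ∫ t in Ioi 0, φ t * Real.exp (-(x * t)) = v

lemma Lap.add {φ χ : ℝ → ℝ} {x u v : ℝ} (h1 : Lap φ x u) (h2 : Lap χ x v) :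
    Lap (fun t => φ t + χ t) x (u + v) := by
  unfold Lap
  simp only [add_mul]
  exact ⟨h1.1.add h2.1, by rw [integral_add h1.1 h2.1, h1.2, h2.2]⟩

lemma Lap.smul {φ : ℝ → ℝ} {x u : ℝ} (c : ℝ) (h1 : Lap φ x u) :
    Lap (fun t => c * φ t) x (c * u) := by
  unfold Lap
  simp only [mul_assoc]
  exact ⟨h1.1.const_mul c, by rw [integral_const_mul, h1.2]⟩

lemma Lap.congr {φ χ : ℝ → ℝ} {x u v : ℝ} (h : Lap φ x u) (h1 : ∀ t, 0 < t → χ t = φ t)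
    (h2 : v = u) : Lap χ x v := by
  have e : EqOn (fun t => φ t * Real.exp (-(x * t))) (fun t => χ t * Real.exp (-(x * t)))
      (Ioi 0) := fun t ht => by simp only [h1 t ht]
  refine ⟨h.1.congr_fun e measurableSet_Ioi, ?_⟩
  rw [h2, ← h.2]
  exact (setIntegral_congr_fun measurableSet_Ioi e).symm

lemma lap_mono (m j : ℕ) {x : ℝ} (hx : 0 < x) :
    Lap (fun t => t ^ m * Real.exp (-t) ^ j) x (m.factorial / (x + j) ^ (m + 1)) := by
  have hxj : 0 < x + j := by positivity
  have h := Real.integral_rpow_mul_exp_neg_mul_Ioi (a := m + 1) (r := x + j) (by positivity) hxj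
  have e : ∀ t : ℝ, t ^ ((m : ℝ) + 1 - 1) * Real.exp (-((x + j) * t)) =
      t ^ m * Real.exp (-t) ^ j * Real.exp (-(x * t)) := by
    intro t
    rw [add_sub_cancel_right, Real.rpow_natCast, ← Real.exp_nat_mul, mul_assoc, ← Real.exp_add]
    congr 2
    ring
  simp only [e] at h
  have hv : (1 / (x + j)) ^ ((m : ℝ) + 1) * Real.Gamma (m + 1) =
      m.factorial / (x + j) ^ (m + 1) := by
    rw [Real.Gamma_nat_eq_factorial, show ((m : ℝ) + 1) = ((m + 1 : ℕ) : ℝ) by push_cast; rfl,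
      Real.rpow_natCast, one_div, inv_pow]
    field_simp
  rw [hv] at h
  refine ⟨?_, h⟩
  by_contra hc
  rw [integral_undef hc] at h
  have : 0 < (m.factorial : ℝ) / (x + j) ^ (m + 1) := by positivity
  linarith

/-- minus 24 times the density representing minus the second derivative of G -/
noncomputable def Br (lam t : ℝ) : ℝ :=
  lam * (-1 + 9 * Real.exp (-t) - 3 * t * Real.exp (-t) - 8 * Real.exp (-t) ^ 2
      - 4 * t * Real.exp (-t) ^ 2 + t ^ 2 * Real.exp (-t) / 2) +
    24 * t * Real.exp (-t) / (1 - Real.exp (-t)) + 2 * t ^ 3 * Real.exp (-t)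
    - 24 * t ^ 2 * Real.exp (-t) - 172 * Real.exp (-t) + 84 * t * Real.exp (-t)
    + 148 * Real.exp (-t) ^ 2 + 52 * t * Real.exp (-t) ^ 2

/-- density representing the first derivative of G -/
noncomputable def w (lam t : ℝ) : ℝ := -Br lam t / (24 * t)

lemma Br_neg (lam t : ℝ) (hl : 4 ≤ lam) (ht : 0 < t) : Br lam t < 0 := by
  have hR := Rneg_0 t ht
  have hq := qneg_0 t ht
  have hE : 1 < Real.exp t := Real.one_lt_exp_iff.2 ht
  have ha : 0 < 1 - Real.exp (-t) := by
    have : Real.exp (-t) < 1 := by simpa using ht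
    linarith
  have key : Br lam t * (1 - Real.exp (-t)) = (Real.exp t)⁻¹ ^ 3 *
      ((lam - 4) * (((-1) * t ^ 0) * Real.exp t ^ 2 +
        (9 * t ^ 0 + (-3) * t ^ 1 + (1 / 2) * t ^ 2) * Real.exp t ^ 1 +
          ((-8) * t ^ 0 + (-4) * t ^ 1)) * (Real.exp t - 1) +
      (((-4) * t ^ 0) * Real.exp t ^ 3 +
        ((-132) * t ^ 0 + 96 * t ^ 1 + (-22) * t ^ 2 + 2 * t ^ 3) * Real.exp t ^ 2 +
        (252 * t ^ 0 + (-36) * t ^ 1 + 22 * t ^ 2 + (-2) * t ^ 3) * Real.exp t ^ 1 +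
        ((-116) * t ^ 0 + (-36) * t ^ 1))) := by
    have h1 : Real.exp t - 1 ≠ 0 := by linarith
    have h2 : 1 - (Real.exp t)⁻¹ ≠ 0 := by rw [← Real.exp_neg]; exact ha.ne'
    rw [Br, Real.exp_neg]
    generalize Real.exp t = E at *
    have hE0 : E ≠ 0 := by positivity
    have h3 : 24 * t * E⁻¹ / (1 - E⁻¹) = 24 * t / (E - 1) := by
      field_simp
    rw [h3]
    field_simp
    ring
  have hlt : Br lam t * (1 - Real.exp (-t)) < 0 := by
    rw [key]
    refine mul_neg_of_pos_of_neg (by positivity) (add_neg_of_nonpos_of_neg ?_ hR)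
    exact mul_nonpos_of_nonpos_of_nonneg
      (mul_nonpos_of_nonneg_of_nonpos (by linarith) hq.le) (by linarith)
  by_contra hc
  have := mul_nonneg (not_lt.1 hc) ha.le
  linarith

lemma w_pos (lam t : ℝ) (hl : 4 ≤ lam) (ht : 0 < t) : 0 < w lam t :=
  div_pos (by linarith [Br_neg lam t hl ht]) (by positivity)

lemma measurable_w (lam : ℝ) : Measurable (w lam) := by
  unfold w Br
  fun_prop

lemma w_le (lam t : ℝ) (hl : 4 ≤ lam) (ht : 0 < t) :
    w lam t ≤ (100 + 10 * lam) * (1 + t + t ^ 2) := by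
  have ha0 : 0 < Real.exp (-t) := Real.exp_pos _
  have ha1 : Real.exp (-t) < 1 := by simpa using ht
  have ha2 : 1 - Real.exp (-t) ≤ t := by linarith [Real.add_one_le_exp (-t)]
  rw [w, div_le_iff₀ (by positivity), Br]
  generalize Real.exp (-t) = a at *
  have hd : 24 * t * a ≤ 24 * t * a / (1 - a) := by
    rw [le_div_iff₀ (by linarith)]
    have : 0 ≤ 24 * t * a := by positivity
    nlinarith
  have hd2 : 24 * a ≤ 24 * t * a / (1 - a) := by
    rw [le_div_iff₀ (by linarith)]
    nlinarith
  have ht2 : 0 < t ^ 2 := by positivity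
  have ht3 : 0 < t ^ 3 := by positivity
  have l1 : lam * ((1 - a) * (1 - 8 * a)) ≤ lam * (1 * t) := by
    have : 0 ≤ (1 - a) * a := mul_nonneg (by linarith) ha0.le
    exact mul_le_mul_of_nonneg_left (by nlinarith) (by linarith)
  have l2 : lam * (3 * t * a + 4 * t * a ^ 2) ≤ lam * (7 * t) := by
    gcongr
    have h1 : t * a ≤ t := by nlinarith
    have h2 : t * a ^ 2 ≤ t * a := by
      have : 0 < t * a := by positivity
      nlinarith
    nlinarith
  have l3 : 0 ≤ lam * t ^ 2 * a := by positivity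
  have c1 : 148 * a - 148 * a ^ 2 ≤ 148 * t := by nlinarith
  have c2 : t ^ 2 * a ≤ t ^ 2 := by nlinarith
  have c3 : 0 ≤ t ^ 3 * a := by positivity
  have c4 : 0 ≤ t * a := by positivity
  have c5 : 0 ≤ t * a ^ 2 := by positivity
  have c6 : 0 ≤ lam * t := by positivity
  have c7 : 0 ≤ lam * t ^ 2 := by positivity
  have c8 : 0 ≤ lam * t ^ 3 := by positivity
  nlinarith

lemma lap_poly {x : ℝ} (hx : 0 < x) : IntegrableOn
    (fun t => (1 + t + t ^ 2) * Real.exp (-(x * t))) (Ioi 0) := by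
  have := (((lap_mono 0 0 hx).add (lap_mono 1 0 hx)).add (lap_mono 2 0 hx)).1
  simpa using this

/-- the representing measure -/
noncomputable def mu (lam : ℝ) : Measure ℝ :=
  (volume.restrict (Ioi 0)).withDensity (fun t => ENNReal.ofReal (w lam t))

lemma integrable_mu (lam : ℝ) (hl : 4 ≤ lam) (φ : ℝ → ℝ) :
    Integrable φ (mu lam) ↔ IntegrableOn (fun t => φ t * w lam t) (Ioi 0) := by
  rw [mu, integrable_withDensity_iff (measurable_w lam).ennreal_ofReal
    (ae_of_all _ fun _ => ENNReal.ofReal_lt_top)]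
  refine integrable_congr ?_
  filter_upwards [ae_restrict_mem measurableSet_Ioi] with t ht
  rw [ENNReal.toReal_ofReal (w_pos lam t hl ht).le]

lemma integral_mu (lam : ℝ) (hl : 4 ≤ lam) (φ : ℝ → ℝ) :
    ∫ t, φ t ∂(mu lam) = ∫ t in Ioi 0, φ t * w lam t := by
  rw [mu, integral_withDensity_eq_integral_toReal_smul (measurable_w lam).ennreal_ofReal
    (ae_of_all _ fun _ => ENNReal.ofReal_lt_top)]
  refine integral_congr_ae ?_
  filter_upwards [ae_restrict_mem measurableSet_Ioi] with t ht
  rw [ENNReal.toReal_ofReal (w_pos lam t hl ht).le, smul_eq_mul, mul_comm]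

lemma integrable_exp_mu (lam : ℝ) (hl : 4 ≤ lam) (x : ℝ) (hx : 0 < x) :
    Integrable (fun t => Real.exp (x * -t)) (mu lam) := by
  rw [integrable_mu lam hl]
  refine Integrable.mono' ((lap_poly hx).const_mul (100 + 10 * lam)) ?_ ?_
  · exact ((by fun_prop : Measurable (fun t : ℝ => Real.exp (x * -t))).mul
      (measurable_w lam)).aestronglyMeasurable
  · filter_upwards [ae_restrict_mem measurableSet_Ioi] with t ht
    have h1 := w_le lam t hl ht
    have h2 := w_pos lam t hl ht
    rw [Real.norm_of_nonneg (by positivity), mul_neg, ← mul_assoc, mul_comm]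
    gcongr

lemma mem_int (lam : ℝ) (hl : 4 ≤ lam) (x : ℝ) (hx : 0 < x) :
    x ∈ interior (ProbabilityTheory.integrableExpSet (fun t : ℝ => -t) (mu lam)) := by
  refine mem_interior.2 ⟨Ioi 0, ?_, isOpen_Ioi, hx⟩
  intro y hy
  exact integrable_exp_mu lam hl y hy

/-- Laplace transform representing the first derivative of G -/
noncomputable def K (lam : ℝ) : ℝ → ℝ := ProbabilityTheory.mgf (fun t : ℝ => -t) (mu lam)

lemma tendsto_K (lam : ℝ) (hl : 4 ≤ lam) : Tendsto (K lam) atTop (𝓝 0) := by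
  have : Tendsto (fun x : ℝ => ∫ t, Real.exp (x * -t) ∂(mu lam)) atTop
      (𝓝 (∫ _t : ℝ, (0 : ℝ) ∂(mu lam))) := by
    have hpos : ∀ᵐ t ∂(mu lam), 0 < t :=
      (withDensity_absolutelyContinuous _ _).ae_le (ae_restrict_mem measurableSet_Ioi)
    refine tendsto_integral_filter_of_dominated_convergence (fun t => Real.exp (1 * -t)) ?_ ?_
      (integrable_exp_mu lam hl 1 one_pos) ?_
    · exact Eventually.of_forall fun x => (by fun_prop : Measurable
        (fun t : ℝ => Real.exp (x * -t))).aestronglyMeasurable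
    · filter_upwards [eventually_ge_atTop 1] with x hx
      filter_upwards [hpos] with t ht
      rw [Real.norm_of_nonneg (by positivity)]
      apply Real.exp_le_exp.2
      nlinarith
    · filter_upwards [hpos] with t ht
      refine Real.tendsto_exp_atBot.comp ?_
      exact tendsto_id.atTop_mul_const_of_neg (by linarith)
  rw [integral_zero] at this
  exact this

lemma hd_K (lam : ℝ) (hl : 4 ≤ lam) (x : ℝ) (hx : 0 < x) :
    HasDerivAt (K lam) (∫ t, -t * Real.exp (x * -t) ∂(mu lam)) x :=
  ProbabilityTheory.hasDerivAt_mgf (mem_int lam hl x hx)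

lemma lap_r (lam x : ℝ) (hx : 0 < x) :
    Lap (fun t => Br lam t * (1 - Real.exp (-t)) / 24) x (r lam x) := by
  have m (k j : ℕ) (c : ℝ) := (lap_mono k j hx).smul c
  have h := ((((((((((((((((((m 0 0 (-lam)).add (m 0 1 (10 * lam - 172))).add
    (m 0 2 (320 - 17 * lam))).add
    (m 0 3 (8 * lam - 148))).add (m 1 1 (108 - 3 * lam))).add (m 1 2 (- lam - 32))).add
    (m 1 3 (4 * lam - 52))).add (m 2 1 (lam / 2 - 24))).add (m 2 2 (24 - lam / 2))).add
    (m 3 1 2)).add (m 3 2 (-2)))))))))).smul (1 / 24)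
  refine h.congr (fun t ht => ?_) ?_
  · have ha : Real.exp (-t) < 1 := by simpa using ht
    rw [Br]
    generalize Real.exp (-t) = a at *
    have : 1 - a ≠ 0 := by linarith
    field_simp
    ring
  · have : x + 1 ≠ 0 := by positivity
    have : x + 2 ≠ 0 := by positivity
    have : x + 3 ≠ 0 := by positivity
    rw [r]
    norm_num [Nat.factorial]
    field_simp
    ring

lemma hd_Kdiff (lam : ℝ) (hl : 4 ≤ lam) (x : ℝ) (hx : 0 < x) :
    HasDerivAt (fun y => K lam y - K lam (y + 1)) (r lam x) x := by
  have hx1 : 0 < x + 1 := by linarith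
  refine ((hd_K lam hl x hx).fun_sub
    (HasDerivAt.comp_add_const x 1 (hd_K lam hl (x + 1) hx1))).congr_deriv ?_
  have i (y : ℝ) (hy : 0 < y) : Integrable (fun t => -t * Real.exp (y * -t)) (mu lam) := by
    simpa using ProbabilityTheory.integrable_pow_mul_exp_of_mem_interior_integrableExpSet
      (mem_int lam hl y hy) 1
  rw [← integral_sub (i x hx) (i (x + 1) hx1), integral_mu lam hl, ← (lap_r lam x hx).2]
  refine setIntegral_congr_fun measurableSet_Ioi (fun t ht => ?_)
  have ht0 : t ≠ 0 := ne_of_gt ht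
  have e : Real.exp ((x + 1) * -t) = Real.exp (-(x * t)) * Real.exp (-t) := by
    rw [← Real.exp_add]; congr 1; ring
  have e2 : Real.exp (x * -t) = Real.exp (-(x * t)) := by congr 1; ring
  simp only [e, e2, w]
  field_simp
  ring

lemma Kdiff_eq (lam : ℝ) (hl : 4 ≤ lam) (x : ℝ) (hx : 0 < x) :
    K lam x - K lam (x + 1) = g lam x - g lam (x + 1) := by
  have hshift : Tendsto (fun y : ℝ => y + 1) atTop atTop :=
    tendsto_atTop_add_const_right _ 1 tendsto_id
  have hlim : Tendsto (fun y => (K lam y - K lam (y + 1)) - (g lam y - g lam (y + 1))) atTop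
      (𝓝 0) := by
    simpa using ((tendsto_K lam hl).sub ((tendsto_K lam hl).comp hshift)).sub
      ((tendsto_g lam).sub ((tendsto_g lam).comp hshift))
  have hd (y : ℝ) (hy : 0 < y) :
      HasDerivAt (fun y => (K lam y - K lam (y + 1)) - (g lam y - g lam (y + 1))) 0 y := by
    simpa using (hd_Kdiff lam hl y hy).fun_sub (hd_gdiff lam y hy)
  have hconst (y : ℝ) (hy : x ≤ y) :
      (K lam y - K lam (y + 1)) - (g lam y - g lam (y + 1)) =
      (K lam x - K lam (x + 1)) - (g lam x - g lam (x + 1)) := by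
    refine isOpen_Ioi.is_const_of_deriv_eq_zero (s := Ioi (0 : ℝ))
      (f := fun y => (K lam y - K lam (y + 1)) - (g lam y - g lam (y + 1)))
      isPreconnected_Ioi (fun y hy => (hd y hy).differentiableAt.differentiableWithinAt)
      (fun y hy => (hd y hy).deriv) (hx.trans_le hy) hx
  have := tendsto_nhds_unique hlim (tendsto_const_nhds.congr'
    ((eventually_ge_atTop x).mono fun y hy => (hconst y hy).symm))
  linarith

lemma g_eq_K (lam : ℝ) (hl : 4 ≤ lam) (x : ℝ) (hx : 0 < x) : g lam x = K lam x := by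
  have hn (n : ℕ) : g lam (x + n) - K lam (x + n) = g lam x - K lam x := by
    induction n with
    | zero => simp
    | succ n ih =>
      have := Kdiff_eq lam hl (x + n) (by positivity)
      push_cast
      rw [← add_assoc]
      linarith
  have hlim := (((tendsto_g lam).sub (tendsto_K lam hl)).comp
    (tendsto_atTop_add_const_left _ x (tendsto_natCast_atTop_atTop (R := ℝ))))
  have := tendsto_nhds_unique hlim (tendsto_const_nhds.congr fun n => (hn n).symm)
  linarith

lemma moment_pos (lam : ℝ) (hl : 4 ≤ lam) (x : ℝ) (hx : 0 < x) (n : ℕ) :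
    0 < (-1 : ℝ) ^ n * ∫ t, (-t) ^ n * Real.exp (x * -t) ∂(mu lam) := by
  have hint := ProbabilityTheory.integrable_pow_mul_exp_of_mem_interior_integrableExpSet
      (mem_int lam hl x hx) n
  rw [integrable_mu lam hl] at hint
  have hint2 := hint.const_mul ((-1 : ℝ) ^ n)
  rw [integral_mu lam hl, ← integral_const_mul]
  have hpos : ∀ t ∈ Ioi (0 : ℝ),
      0 < (-1 : ℝ) ^ n * ((-t) ^ n * Real.exp (x * -t) * w lam t) := by
    intro t ht
    have h2 := w_pos lam t hl ht
    have ht' : 0 < t := ht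
    have : (-1 : ℝ) ^ n * ((-t) ^ n * Real.exp (x * -t) * w lam t) =
        t ^ n * Real.exp (x * -t) * w lam t := by
      rw [← mul_assoc, ← mul_assoc, ← mul_pow]
      simp
    rw [this]
    positivity
  refine (setIntegral_pos_iff_support_of_nonneg_ae ?_ hint2).2 ?_
  · filter_upwards [ae_restrict_mem measurableSet_Ioi] with t ht using (hpos t ht).le
  · rw [inter_eq_right.2 (fun t ht => Function.mem_support.2 (hpos t ht).ne')]
    simp

lemma derivWithin_G (lam : ℝ) :
    EqOn (derivWithin (G lam) (Ioi 0)) (g lam) (Ioi 0) := fun x hx =>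
  ((hd_G lam x hx).hasDerivWithinAt).derivWithin (isOpen_Ioi.uniqueDiffWithinAt hx)

theorem stmt_9 (lam : ℝ) :
    (∀ k : ℕ, 1 ≤ k → ∀ x ∈ Set.Ioi (0 : ℝ),
      0 < (-1 : ℝ) ^ (k + 1) * iteratedDerivWithin k (G lam) (Set.Ioi 0) x) ↔
    4 ≤ lam := by
  constructor
  · intro h
    by_contra hc
    obtain ⟨x, hx, hg⟩ := converse lam (not_le.1 hc)
    have h1 := h 1 le_rfl x hx
    rw [iteratedDerivWithin_one, derivWithin_G lam hx] at h1
    norm_num at h1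
    linarith
  · intro hl k hk x hx
    obtain ⟨n, rfl⟩ : ∃ n, k = n + 1 := ⟨k - 1, by omega⟩
    have hK : EqOn (derivWithin (G lam) (Ioi 0)) (K lam) (Ioi 0) := fun y hy =>
      (derivWithin_G lam hy).trans (g_eq_K lam hl y hy)
    rw [iteratedDerivWithin_succ', iteratedDerivWithin_congr hK hx,
      iteratedDerivWithin_of_isOpen isOpen_Ioi hx, K,
      ProbabilityTheory.iteratedDeriv_mgf (mem_int lam hl x hx) n]
    have := moment_pos lam hl x hx n
    rw [pow_add, pow_add]
    simpa using this
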